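/- arXiv:2401.00244 — 2 statements merged into one kernel-verified Lean document; each statement's English description precedes it below -/
import Mathlib

section
/- Let p ≥ 5 be a prime. Then the Dedekind–Rademacher sum s(p, 3; 5/6, −1/2) equals 1/18 if p ≡ 1 (mod 6), and equals −1/18 if p ≡ 5 (mod 6). -/
open Real
open scoped Classical

/-- The generalized sawtooth function `((x))`. -/
noncomputable def saw (x : ℝ) : ℝ :=
  if ∃ m : ℤ, x = m then 0 else Int.fract x - 1 / 2

/-- The Dedekind–Rademacher sum
`s(b,a;x,y) = ∑_{k=0}^{|a|−1} ((x + (b/a)(k+y))) (((k+y)/a))`. -/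
noncomputable def dedekindRademacher (b a : ℤ) (x y : ℝ) : ℝ :=
  ∑ k ∈ Finset.range a.natAbs,
    saw (x + (b : ℝ) / (a : ℝ) * ((k : ℝ) + y)) * saw (((k : ℝ) + y) / (a : ℝ))

theorem saw_of_eq (x r : ℝ) (n : ℤ) (h : x = n + r) (h0 : 0 < r) (h1 : r < 1) :
    saw x = r - 1 / 2 := by
  have hf : Int.fract x = r := by
    rw [h, Int.fract_intCast_add, Int.fract_eq_self]
    exact ⟨h0.le, h1⟩
  unfold saw
  rw [if_neg, hf]
  rintro ⟨m, hm⟩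
  rw [hm, Int.fract_intCast] at hf
  linarith

theorem saw_of_int (x : ℝ) (n : ℤ) (h : x = n) : saw x = 0 := by
  unfold saw
  rw [if_pos ⟨n, h⟩]

/-- For a prime `p ≥ 5`: `s(p, 3; 5/6, −1/2) = 1/18` if `p ≡ 1 (mod 6)`, and
`s(p, 3; 5/6, −1/2) = −1/18` if `p ≡ 5 (mod 6)`. -/
theorem stmt_12 (p : ℕ) (hp : p.Prime) (hp5 : 5 ≤ p) :
    (p % 6 = 1 → dedekindRademacher (p : ℤ) 3 (5 / 6) (-1 / 2) = 1 / 18) ∧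
    (p % 6 = 5 → dedekindRademacher (p : ℤ) 3 (5 / 6) (-1 / 2) = -1 / 18) := by
  have e0 : saw ((((0 : ℕ) : ℝ) + -1 / 2) / ((3 : ℤ) : ℝ)) = 5 / 6 - 1 / 2 :=
    saw_of_eq _ _ (-1) (by norm_num) (by norm_num) (by norm_num)
  have e1 : saw ((((1 : ℕ) : ℝ) + -1 / 2) / ((3 : ℤ) : ℝ)) = 1 / 6 - 1 / 2 :=
    saw_of_eq _ _ 0 (by norm_num) (by norm_num) (by norm_num)
  have e2 : saw ((((2 : ℕ) : ℝ) + -1 / 2) / ((3 : ℤ) : ℝ)) = 1 / 2 - 1 / 2 :=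
    saw_of_eq _ _ 0 (by norm_num) (by norm_num) (by norm_num)
  have hn : (3 : ℤ).natAbs = 3 := rfl
  constructor
  · intro h
    obtain ⟨q, rfl⟩ : ∃ q, p = 6 * q + 1 := ⟨p / 6, by omega⟩
    unfold dedekindRademacher
    rw [hn, Finset.sum_range_succ, Finset.sum_range_succ, Finset.sum_range_one, e0, e1, e2,
      saw_of_eq _ (2 / 3) (-q) (by push_cast; ring) (by norm_num) (by norm_num),
      saw_of_int _ (q + 1) (by push_cast; ring)]
    norm_num
  · intro h
    obtain ⟨q, rfl⟩ : ∃ q, p = 6 * q + 5 := ⟨p / 6, by omega⟩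
    unfold dedekindRademacher
    rw [hn, Finset.sum_range_succ, Finset.sum_range_succ, Finset.sum_range_one, e0, e1, e2,
      saw_of_int _ (-q) (by push_cast; ring),
      saw_of_eq _ (2 / 3) (q + 1) (by push_cast; ring) (by norm_num) (by norm_num)]
    norm_num
end

section
/- Let p ≥ 5 be a prime. Then the Dedekind–Rademacher sum s(p², 6p+1; (12p+1)/(12p+2), −1/2) equals 1/2 if p = 5, equals (−p² + 114p + 199)/(24(6p+1)) if p ≡ 1 (mod 4) and p ≠ 5, and equals (−p² − 102p + 163)/(24(6p+1)) if p ≡ 3 (mod 4). -/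
open Real
open scoped Classical

lemma saw_add_int (x : ℝ) (n : ℤ) : saw (x + n) = saw x := by
  unfold saw
  have h : (∃ m : ℤ, x + n = m) ↔ ∃ m : ℤ, x = m := by
    constructor
    · rintro ⟨m, hm⟩
      exact ⟨m - n, by push_cast; linarith⟩
    · rintro ⟨m, hm⟩
      exact ⟨m + n, by push_cast; linarith⟩
  simp only [h, Int.fract_add_intCast]

lemma saw_of_between (x : ℝ) (n : ℤ) (h1 : (n : ℝ) < x) (h2 : x < n + 1) :
    saw x = x - n - 1 / 2 := by
  unfold saw
  have hf : ⌊x⌋ = n := by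
    rw [Int.floor_eq_iff]; exact ⟨h1.le, h2⟩
  rw [if_neg, Int.fract, hf]
  rintro ⟨m, hm⟩
  rw [hm] at h1 h2
  have h1' : n < m := by exact_mod_cast h1
  have h2' : m < n + 1 := by exact_mod_cast h2
  omega

/-- Reindexing of a sum over residues. -/
lemma reindex (a : ℕ) (ha : 0 < a) (u v c : ℤ) (huv : (a : ℤ) ∣ u * v - 1) (F : ℕ → ℝ) :
    ∑ k ∈ Finset.range a, F k
      = ∑ j ∈ Finset.range a, F ((u * j + c) % (a : ℤ)).toNat := by
  have ha' : (0 : ℤ) < a := by exact_mod_cast ha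
  have key : ∀ x : ℤ, (((x % (a : ℤ)).toNat : ℕ) : ℤ) = x % a := fun x =>
    Int.toNat_of_nonneg (Int.emod_nonneg _ ha'.ne')
  have mem : ∀ x : ℤ, (x % (a : ℤ)).toNat ∈ Finset.range a := by
    intro x
    rw [Finset.mem_range]
    have := Int.emod_lt_of_pos x ha'
    have := key x
    omega
  symm
  refine Finset.sum_nbij' (fun j => ((u * (j : ℤ) + c) % (a : ℤ)).toNat)
    (fun k => ((v * ((k : ℤ) - c)) % (a : ℤ)).toNat) (fun _ _ => mem _) (fun _ _ => mem _)
    ?_ ?_ (fun _ _ => rfl)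
  · intro j hj
    rw [Finset.mem_range] at hj
    zify
    rw [key, key]
    have h : v * ((u * (j : ℤ) + c) % a - c) ≡ j [ZMOD a] := by
      have h1 : (u * (j : ℤ) + c) % a ≡ u * j + c [ZMOD a] := Int.mod_modEq _ _
      have h2 := (h1.sub_right c).mul_left v
      refine h2.trans ?_
      apply Int.ModEq.symm
      rw [Int.modEq_iff_dvd]
      have : v * (u * (j : ℤ) + c - c) - j = (u * v - 1) * j := by ring
      rw [this]; exact huv.mul_right _
    rw [h]
    exact Int.emod_eq_of_lt (by positivity) (by exact_mod_cast hj)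
  · intro j hj
    rw [Finset.mem_range] at hj
    zify
    rw [key, key]
    have h : u * (v * ((j : ℤ) - c) % a) + c ≡ j [ZMOD a] := by
      have h1 : (v * ((j : ℤ) - c)) % a ≡ v * (j - c) [ZMOD a] := Int.mod_modEq _ _
      have h2 := (h1.mul_left u).add_right c
      refine h2.trans ?_
      apply Int.ModEq.symm
      rw [Int.modEq_iff_dvd]
      have : u * (v * ((j : ℤ) - c)) + c - j = (u * v - 1) * (j - c) := by ring
      rw [this]; exact huv.mul_right _
    rw [h]
    exact Int.emod_eq_of_lt (by positivity) (by exact_mod_cast hj)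

/-- Threshold. -/
def thr (a m : ℕ) : ℕ := max 1 ((a * (2 * m + 1) + 35) / 72)

lemma count_thr (a j : ℕ) (hj : 1 ≤ j) (hja : j < a) :
    (((72 * j + 36 + a) / (2 * a) : ℕ) : ℝ)
      = ∑ m ∈ Finset.range 36, if thr a m ≤ j then (1 : ℝ) else 0 := by
  rw [Finset.sum_boole]
  congr 1
  set M := (72 * j + 36 + a) / (2 * a) with hM
  have hM36 : M ≤ 36 := by
    have : M < 37 := by
      rw [hM, Nat.div_lt_iff_lt_mul (by omega)]; omega
    omega
  have : Finset.filter (fun m => thr a m ≤ j) (Finset.range 36) = Finset.range M := by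
    ext m
    simp only [Finset.mem_filter, Finset.mem_range]
    have h1 : thr a m ≤ j ↔ m + 1 ≤ M := by
      rw [hM, Nat.le_div_iff_mul_le (by omega)]
      unfold thr
      rw [max_le_iff, ← Nat.lt_succ_iff (m := (a * (2 * m + 1) + 35) / 72),
        Nat.div_lt_iff_lt_mul (by norm_num)]
      have e1 : (m + 1) * (2 * a) = 2 * (a * m) + 2 * a := by ring
      have e2 : a * (2 * m + 1) = 2 * (a * m) + a := by ring
      rw [e1, e2]
      omega
    rw [h1]
    omega
  rw [this, Finset.card_range]

lemma sum_tail (a : ℝ) (n t : ℕ) (h1 : 1 ≤ t) (h2 : t ≤ n) :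
    ∑ j ∈ Finset.Ico 1 n, (if t ≤ j then (1 : ℝ) else 0) * (2 * j - a)
      = (n : ℝ) * (n - 1) - t * (t - 1) - a * (n - t) := by
  have : ∑ j ∈ Finset.Ico 1 n, (if t ≤ j then (1 : ℝ) else 0) * (2 * j - a)
      = ∑ j ∈ Finset.Ico t n, (2 * (j : ℝ) - a) := by
    simp only [ite_mul, one_mul, zero_mul]
    rw [← Finset.sum_filter]
    congr 1
    ext j; simp only [Finset.mem_filter, Finset.mem_Ico]; omega
  rw [this]
  induction n, h2 using Nat.le_induction with
  | base => simp
  | succ n hn ih =>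
    have h3 := ih (by
      simp only [ite_mul, one_mul, zero_mul]
      rw [← Finset.sum_filter]
      congr 1
      ext j; simp only [Finset.mem_filter, Finset.mem_Ico]; omega)
    rw [Finset.sum_Ico_succ_top hn, h3]
    push_cast; ring

lemma sum_quad (a : ℝ) (n : ℕ) (h : 1 ≤ n) :
    ∑ j ∈ Finset.Ico 1 n, (2 * (j : ℝ) - a) * (36 * j + 18)
      = 12 * n * (n - 1) * (2 * n - 1) + 18 * n * (n - 1) - 18 * a * n * (n - 1)
        - 18 * a * (n - 1) := by
  induction n, h using Nat.le_induction with
  | base => simp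
  | succ n hn ih =>
    rw [Finset.sum_Ico_succ_top hn, ih]
    push_cast; ring

lemma thr_le (a m : ℕ) (ha : 31 ≤ a) (hm : m < 36) : thr a m ≤ a := by
  unfold thr
  rw [max_le_iff]
  refine ⟨by omega, ?_⟩
  have : a * (2 * m + 1) ≤ a * 71 := Nat.mul_le_mul_left _ (by omega)
  omega

lemma main_sum (a : ℕ) (ha : 31 ≤ a) :
    ∑ j ∈ Finset.Ico 1 a, (2 * (j : ℝ) - a) *
        (36 * j + 18 - a * (((72 * j + 36 + a) / (2 * a) : ℕ) : ℝ))
      = a * (6 * (a - 1) * (a - 2)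
        - ∑ m ∈ Finset.range 36, ((thr a m : ℝ) - 1) * (a - thr a m)) := by
  have h1 : ∀ j ∈ Finset.Ico 1 a, (2 * (j : ℝ) - a) *
        (36 * j + 18 - a * (((72 * j + 36 + a) / (2 * a) : ℕ) : ℝ))
      = (2 * (j : ℝ) - a) * (36 * j + 18)
        - a * ∑ m ∈ Finset.range 36, (if thr a m ≤ j then (1 : ℝ) else 0) * (2 * j - a) := by
    intro j hj
    rw [Finset.mem_Ico] at hj
    rw [count_thr a j hj.1 hj.2, ← Finset.sum_mul]
    ring
  rw [Finset.sum_congr rfl h1, Finset.sum_sub_distrib, ← Finset.mul_sum, Finset.sum_comm,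
    sum_quad _ _ (by omega)]
  have h2 : ∀ m ∈ Finset.range 36, ∑ j ∈ Finset.Ico 1 a,
      (if thr a m ≤ j then (1 : ℝ) else 0) * (2 * j - a)
      = ((thr a m : ℝ) - 1) * (a - thr a m) := by
    intro m hm
    rw [Finset.mem_range] at hm
    rw [sum_tail _ _ _ (by unfold thr; exact le_max_left _ _) (thr_le a m ha hm)]
    ring
  rw [Finset.sum_congr rfl h2]
  ring

lemma term_eq (p h j : ℕ) (hh : p = 2 * h + 1) (hj : j < 6 * p + 1) (k : ℕ)
    (hk : (k : ℤ) = (36 * (j : ℤ) + (18 - 3 * p)) % ((6 * p + 1 : ℕ) : ℤ)) :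
    saw ((12 * (p : ℝ) + 1) / (12 * (p : ℝ) + 2)
      + (((p : ℤ) ^ 2 : ℤ) : ℝ) / ((6 * (p : ℤ) + 1 : ℤ) : ℝ) * ((k : ℝ) + -1 / 2))
      * saw (((k : ℝ) + -1 / 2) / ((6 * (p : ℤ) + 1 : ℤ) : ℝ))
    = saw ((j : ℝ) / ((6 * p + 1 : ℕ) : ℝ)) *
      ((36 * j + 18 - ((6 * p + 1 : ℕ) : ℝ) *
        (((72 * j + 36 + (6 * p + 1)) / (2 * (6 * p + 1)) : ℕ) : ℝ)) / ((6 * p + 1 : ℕ) : ℝ)) := by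
  set n := (36 * (j : ℤ) + (18 - 3 * p)) / ((6 * p + 1 : ℕ) : ℤ) with hn
  have hk2 : (k : ℤ) = 36 * j + (18 - 3 * p) - (6 * p + 1) * n := by
    have := Int.emod_add_mul_ediv (36 * (j : ℤ) + (18 - 3 * p)) ((6 * p + 1 : ℕ) : ℤ)
    rw [← hk, ← hn] at this
    push_cast at this
    linarith
  have hkr : (k : ℝ) = 36 * j + (18 - 3 * p) - (6 * p + 1) * n := by exact_mod_cast hk2
  have hpr : (p : ℝ) = 2 * h + 1 := by exact_mod_cast hh
  have hpos : (0 : ℝ) < 6 * p + 1 := by positivity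
  congr 1
  · have : (12 * (p : ℝ) + 1) / (12 * (p : ℝ) + 2)
      + (((p : ℤ) ^ 2 : ℤ) : ℝ) / ((6 * (p : ℤ) + 1 : ℤ) : ℝ) * ((k : ℝ) + -1 / 2)
      = (j : ℝ) / ((6 * p + 1 : ℕ) : ℝ)
        + ((1 - (p : ℤ) ^ 2 * n + ((6 * p - 1) * j + (6 * h + 2 - 2 * h ^ 2 - 2 * h)) : ℤ) : ℝ) := by
      push_cast
      have h12 : (12 * (p : ℝ) + 2) = 2 * (6 * p + 1) := by ring
      rw [hkr, h12]
      field_simp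
      rw [hpr]
      ring
    rw [this, saw_add_int]
  · set M := (72 * j + 36 + (6 * p + 1)) / (2 * (6 * p + 1)) with hM
    have hM1 : M * (2 * (6 * p + 1)) ≤ 72 * j + 36 + (6 * p + 1) := Nat.div_mul_le_self _ _
    have hM2 : 72 * j + 36 + (6 * p + 1) < (M + 1) * (2 * (6 * p + 1)) := by
      rw [← Nat.div_lt_iff_lt_mul (by omega)]; omega
    have hM1' : M * (2 * (6 * p + 1)) < 72 * j + 36 + (6 * p + 1) := by
      have e : M * (2 * (6 * p + 1)) = 2 * (M * (6 * p + 1)) := by ring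
      omega
    have r1 : (M : ℝ) * (2 * (6 * p + 1)) < 72 * j + 36 + (6 * p + 1) := by exact_mod_cast hM1'
    have r2 : (72 * j + 36 + (6 * p + 1) : ℝ) < (M + 1) * (2 * (6 * p + 1)) := by
      exact_mod_cast hM2
    have e : ((k : ℝ) + -1 / 2) / ((6 * (p : ℤ) + 1 : ℤ) : ℝ)
        = (72 * j + 36 - (6 * p + 1)) / (2 * (6 * p + 1)) + ((-n : ℤ) : ℝ) := by
      push_cast
      rw [hkr]
      field_simp
      ring
    rw [e, saw_add_int, saw_of_between _ ((M : ℤ) - 1)]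
    · push_cast
      field_simp
      ring
    · rw [lt_div_iff₀ (by positivity)]
      push_cast
      linarith
    · rw [div_lt_iff₀ (by positivity)]
      push_cast
      linarith

lemma dr_eq (p : ℕ) (hp5 : 5 ≤ p) (hodd : p % 2 = 1) :
    dedekindRademacher ((p : ℤ) ^ 2) (6 * (p : ℤ) + 1)
        ((12 * (p : ℝ) + 1) / (12 * (p : ℝ) + 2)) (-1 / 2)
    = (6 * (6 * p) * (6 * p - 1)
        - ∑ m ∈ Finset.range 36, ((thr (6 * p + 1) m : ℝ) - 1) * (6 * p + 1 - thr (6 * p + 1) m))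
      / (2 * (6 * p + 1)) := by
  obtain ⟨h, hh⟩ : ∃ h, p = 2 * h + 1 := ⟨p / 2, by omega⟩
  unfold dedekindRademacher
  have hab : (6 * (p : ℤ) + 1).natAbs = 6 * p + 1 := by omega
  rw [hab, reindex (6 * p + 1) (by omega) 36 ((p : ℤ) ^ 2) (18 - 3 * p)
    ⟨6 * p - 1, by push_cast; ring⟩]
  rw [Finset.sum_congr rfl (fun j hj => term_eq p h j hh (Finset.mem_range.1 hj) _
    (Int.toNat_of_nonneg (Int.emod_nonneg _ (by positivity))))]
  rw [Finset.range_eq_Ico, Finset.sum_eq_sum_Ico_succ_bot (by omega)]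
  have h0 : saw (((0 : ℕ) : ℝ) / ((6 * p + 1 : ℕ) : ℝ)) = 0 := by
    unfold saw
    rw [if_pos ⟨0, by simp⟩]
  rw [h0, zero_mul, zero_add, zero_add]
  have hm := main_sum (6 * p + 1) (by omega)
  have hpos : (0 : ℝ) < ((6 * p + 1 : ℕ) : ℝ) := by positivity
  have hterm : ∀ j ∈ Finset.Ico 1 (6 * p + 1), saw ((j : ℝ) / ((6 * p + 1 : ℕ) : ℝ)) *
      ((36 * j + 18 - ((6 * p + 1 : ℕ) : ℝ) *
        (((72 * j + 36 + (6 * p + 1)) / (2 * (6 * p + 1)) : ℕ) : ℝ)) / ((6 * p + 1 : ℕ) : ℝ))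
      = ((2 * (j : ℝ) - ((6 * p + 1 : ℕ) : ℝ)) * (36 * j + 18 - ((6 * p + 1 : ℕ) : ℝ) *
        (((72 * j + 36 + (6 * p + 1)) / (2 * (6 * p + 1)) : ℕ) : ℝ)))
        * (1 / (2 * ((6 * p + 1 : ℕ) : ℝ) ^ 2)) := by
    intro j hj
    rw [Finset.mem_Ico] at hj
    have hj1 : (1 : ℝ) ≤ j := by exact_mod_cast hj.1
    have hj2 : (j : ℝ) < ((6 * p + 1 : ℕ) : ℝ) := by exact_mod_cast hj.2
    rw [saw_of_between _ 0 (by push_cast; positivity)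
      (by rw [div_lt_iff₀ hpos]; push_cast at hj2 ⊢; linarith)]
    generalize (((72 * j + 36 + (6 * p + 1)) / (2 * (6 * p + 1)) : ℕ) : ℝ) = M
    generalize ((6 * p + 1 : ℕ) : ℝ) = A at *
    have := hpos.ne'
    field_simp
    push_cast
    ring
  rw [Finset.sum_congr rfl hterm, ← Finset.sum_mul, hm]
  have e : (6 * (p : ℝ) + 1) = ((6 * p + 1 : ℕ) : ℝ) := by push_cast; ring
  have e2 : (p : ℝ) = (((6 * p + 1 : ℕ) : ℝ) - 1) / 6 := by push_cast; ring
  rw [e]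
  have e3 : 6 * (6 * (p : ℝ)) * (6 * p - 1) =
    6 * (((6 * p + 1 : ℕ) : ℝ) - 1) * (((6 * p + 1 : ℕ) : ℝ) - 2) := by push_cast; ring
  rw [e3]
  field_simp

lemma thr_cast (q r m : ℕ) (h : 37 ≤ 6 * (12 * q + r) + 1) :
    (thr (6 * (12 * q + r) + 1) m : ℝ)
      = (2 * m + 1) * q + (((6 * r + 1) * (2 * m + 1) + 35) / 72 : ℕ) := by
  unfold thr
  have e : (6 * (12 * q + r) + 1) * (2 * m + 1) + 35
    = ((6 * r + 1) * (2 * m + 1) + 35) + 72 * ((2 * m + 1) * q) := by ring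
  have h2 : 1 ≤ ((6 * (12 * q + r) + 1) * (2 * m + 1) + 35) / 72 := by
    rw [Nat.le_div_iff_mul_le (by norm_num)]
    nlinarith
  rw [max_eq_right h2, e, Nat.add_mul_div_left _ _ (by norm_num)]
  push_cast; ring

set_option maxHeartbeats 4000000

/-- For a prime `p ≥ 5`: `s(p², 6p+1; (12p+1)/(12p+2), −1/2)` equals `1/2` if `p = 5`,
equals `(−p² + 114p + 199)/(24(6p+1))` if `p ≡ 1 (mod 4)` and `p ≠ 5`, and equals
`(−p² − 102p + 163)/(24(6p+1))` if `p ≡ 3 (mod 4)`. -/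
theorem stmt_14 (p : ℕ) (hp : p.Prime) (hp5 : 5 ≤ p) :
    (p = 5 →
      dedekindRademacher ((p : ℤ) ^ 2) (6 * (p : ℤ) + 1)
        ((12 * (p : ℝ) + 1) / (12 * (p : ℝ) + 2)) (-1 / 2) = 1 / 2) ∧
    (p % 4 = 1 → p ≠ 5 →
      dedekindRademacher ((p : ℤ) ^ 2) (6 * (p : ℤ) + 1)
        ((12 * (p : ℝ) + 1) / (12 * (p : ℝ) + 2)) (-1 / 2) =
      (-(p : ℝ) ^ 2 + 114 * (p : ℝ) + 199) / (24 * (6 * (p : ℝ) + 1))) ∧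
    (p % 4 = 3 →
      dedekindRademacher ((p : ℤ) ^ 2) (6 * (p : ℤ) + 1)
        ((12 * (p : ℝ) + 1) / (12 * (p : ℝ) + 2)) (-1 / 2) =
      (-(p : ℝ) ^ 2 - 102 * (p : ℝ) + 163) / (24 * (6 * (p : ℝ) + 1))) := by
  have hodd : p % 2 = 1 := by
    rcases hp.eq_two_or_odd with h | h <;> omega
  have h3 : p % 3 ≠ 0 := by
    intro h
    have := (Nat.prime_dvd_prime_iff_eq Nat.prime_three hp).1 (Nat.dvd_of_mod_eq_zero h)
    omega
  rw [dr_eq p hp5 hodd]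
  refine ⟨?_, ?_, ?_⟩
  · rintro rfl
    norm_num [Finset.sum_range_succ, thr]
  · intro h4 hne
    have hr : p % 12 = 1 ∨ p % 12 = 5 := by omega
    obtain ⟨q, hq⟩ : ∃ q, q = p / 12 := ⟨_, rfl⟩
    rcases hr with hr | hr
    · obtain rfl : p = 12 * q + 1 := by omega
      simp only [thr_cast q 1 _ (by omega)]
      norm_num [Finset.sum_range_succ]
      field_simp
      ring
    · obtain rfl : p = 12 * q + 5 := by omega
      simp only [thr_cast q 5 _ (by omega)]
      norm_num [Finset.sum_range_succ]
      field_simp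
      ring
  · intro h4
    have hr : p % 12 = 7 ∨ p % 12 = 11 := by omega
    obtain ⟨q, hq⟩ : ∃ q, q = p / 12 := ⟨_, rfl⟩
    rcases hr with hr | hr
    · obtain rfl : p = 12 * q + 7 := by omega
      simp only [thr_cast q 7 _ (by omega)]
      norm_num [Finset.sum_range_succ]
      field_simp
      ring
    · obtain rfl : p = 12 * q + 11 := by omega
      simp only [thr_cast q 11 _ (by omega)]
      norm_num [Finset.sum_range_succ]
      field_simp
      ring
end
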